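/- Let T = (p(0) < p(1) < ⋯ < p(k)) be a prefix transition path, and let τ = (t₁,…,t_k) be a sequence of letters where t_j is a transition symbol from p(j−1) to p(j). Let C_n(T,τ) be the set of words in C_n whose prefix transition path is T with j-th transition on the symbol t_j. Let γ_T be the maximum of γ_{p(i)} over i ∈ {0,…,k}, and let d_T be the number of indices i ∈ {0,…,k} with γ_{p(i)} = γ_T. Then |C_n(T,τ)| = Θ(n^{d_T−1}·γ_T^n). Consequently, |C_n| = Θ(n^{D−1}·γ^n). -/

import Mathlib

open Filter Asymptotics
open scoped Classical

/-- An embedding order on words over a weighted alphabet. -/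
structure EmbeddingOrder (A : Type*) (w : A → ℕ) where
  le : List A → List A → Prop
  le_refl : ∀ W, le W W
  le_trans : ∀ {U V W}, le U V → le V W → le U W
  le_antisymm : ∀ {V W}, le V W → le W V → V = W
  nil_le : ∀ W, le [] W
  weight_lt : ∀ {W V}, le W V → W ≠ V → (W.map w).sum < (V.map w).sum
  le_iff_factor : ∀ W V, le W V ↔ ∃ Ws : List (List A),
    Ws.length = V.length ∧ Ws.flatten = W ∧ ∀ q ∈ Ws.zip V, le q.1 [q.2]

namespace EmbeddingOrder

variable {A : Type*} {w : A → ℕ} (E : EmbeddingOrder A w) {f : ℕ} (φ : Fin f → List A)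

/-- The weight of a word: the sum of the weights of its letters. -/
def wt (w : A → ℕ) (W : List A) : ℕ := (W.map w).sum

/-- The class `C = A* ∩ Av(φ¹,…,φ^f)` of all words avoiding every forbidden word. -/
def Cset : Set (List A) := {W | ∀ i, ¬ E.le (φ i) W}

/-- The prefix state of `W`: its `i`-th component is the length of the longest prefix
of the forbidden word `φ i` contained in `W`. -/
noncomputable def pstate (W : List A) : Fin f → ℕ := fun i =>
  sSup {p | p ≤ (φ i).length ∧ E.le ((φ i).take p) W}

/-- The suffix state of `W`: its `i`-th component is the length of the longest suffix
of the forbidden word `φ i` contained in `W`. -/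
noncomputable def sstate (W : List A) : Fin f → ℕ := fun i =>
  sSup {p | p ≤ (φ i).length ∧ E.le ((φ i).drop ((φ i).length - p)) W}

/-- A prefix state `p` and a suffix state `s` *overlap* if `p i + s i ≥ ℓ_i` for some
`i` (equivalently, `XY ∉ C` whenever `X` has prefix state `p` and `Y` suffix state `s`);
otherwise they are *compatible*. -/
def POverlap (p s : Fin f → ℕ) : Prop := ∃ i, (φ i).length ≤ p i + s i

/-- The (prefix) loop alphabet of a state `p`: the letters whose appending does not
change the prefix state `p`. -/
def stateLoopP (p : Fin f → ℕ) : Set A :=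
  {a | ∀ X : List A, E.pstate φ X = p → E.pstate φ (X ++ [a]) = p}

/-- The suffix loop alphabet of a state `s`: the letters whose prepending does not
change the suffix state `s`. -/
def stateLoopS (s : Fin f → ℕ) : Set A :=
  {a | ∀ Y : List A, E.sstate φ Y = s → E.sstate φ (a :: Y) = s}

/-- `p'` is a *prefix successor* of `p`: `p' ≠ p` and some letter is a transition
symbol from `p` to `p'`. -/
def PSucc (p p' : Fin f → ℕ) : Prop :=
  p ≠ p' ∧ ∃ b : A, ∀ X : List A, E.pstate φ X = p → E.pstate φ (X ++ [b]) = p'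

/-- `s'` is a *suffix successor* of `s`. -/
def SSucc (s s' : Fin f → ℕ) : Prop :=
  s ≠ s' ∧ ∃ b : A, ∀ Y : List A, E.sstate φ Y = s → E.sstate φ (b :: Y) = s'

/-- Compatible states `p` (prefix) and `s` (suffix) *match* if every prefix successor
of `p` overlaps with `s` and every suffix successor of `s` overlaps with `p`. -/
def Matches (p s : Fin f → ℕ) : Prop :=
  ¬ POverlap φ p s ∧ (∀ p', E.PSucc φ p p' → POverlap φ p' s) ∧
    ∀ s', E.SSucc φ s s' → POverlap φ p s'

/-- `ρ(S)`: the unique positive root of `1 − Σ_{a∈S} x^{weight a}` for a nonempty set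
`S` of letters (realised as a supremum). -/
noncomputable def rhoOf (w : A → ℕ) (S : Set A) : ℝ :=
  sSup {x : ℝ | 0 ≤ x ∧ ∑' a : S, x ^ w (a : A) ≤ 1}

/-- The growth rate of `S*`: the reciprocal `ρ(S)⁻¹` of the positive root of
`1 − Σ_{a∈S} x^{weight a}`. -/
noncomputable def growthOf (w : A → ℕ) (S : Set A) : ℝ := (rhoOf w S)⁻¹

/-- The dominant growth rate `γ` of the class: the largest growth rate of the loop
alphabet of a (reachable) prefix state. -/
noncomputable def gammaC : ℝ :=
  sSup {g : ℝ | ∃ X ∈ E.Cset φ, g = growthOf w (E.stateLoopP φ (E.pstate φ X))}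

/-- The number of dominant loop blocks (equivalently, dominant states) in the prefix
decomposition of `W`. -/
noncomputable def domCountP (W : List A) : ℕ :=
  Set.ncard {p : Fin f → ℕ | (∃ j ≤ W.length, E.pstate φ (W.take j) = p) ∧
    growthOf w (E.stateLoopP φ p) = E.gammaC φ}

/-- The number of dominant loop blocks (equivalently, dominant states) in the suffix
decomposition of `W`. -/
noncomputable def domCountS (W : List A) : ℕ :=
  Set.ncard {s : Fin f → ℕ | (∃ j ≤ W.length, E.sstate φ (W.drop j) = s) ∧
    growthOf w (E.stateLoopS φ s) = E.gammaC φ}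

/-- `D`: the largest number of dominant states appearing on a single prefix transition
path of a word of the class. -/
noncomputable def Dmax : ℕ := sSup {d : ℕ | ∃ W ∈ E.Cset φ, E.domCountP φ W = d}

end EmbeddingOrder

namespace EmbeddingOrder

variable {A : Type*} {w : A → ℕ} (E : EmbeddingOrder A w) {f : ℕ} (φ : Fin f → List A)

/-- `γ_T`: the maximum of the growth rates `γ_{p i}` of the states on the transition
path `T = (p 0 < p 1 < ⋯ < p k)`. -/
noncomputable def gT {k : ℕ} (p : Fin (k + 1) → Fin f → ℕ) : ℝ :=
  sSup {g : ℝ | ∃ j : Fin (k + 1), g = growthOf w (E.stateLoopP φ (p j))}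

/-- `d_T`: the number of states on the path `T` whose growth rate equals `γ_T`. -/
noncomputable def dT {k : ℕ} (p : Fin (k + 1) → Fin f → ℕ) : ℕ :=
  Set.ncard {j : Fin (k + 1) | growthOf w (E.stateLoopP φ (p j)) = E.gT φ p}

/-- `W` has prefix transition path `p 0 < p 1 < ⋯ < p k`, with the `j`-th transition
occurring on the symbol `τ j`. -/
def Realizes {k : ℕ} (p : Fin (k + 1) → Fin f → ℕ) (τ : Fin k → A) (W : List A) : Prop :=
  ∃ g : Fin k → ℕ, StrictMono g ∧ (∀ j, g j < W.length) ∧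
    (∀ j : Fin k, W[g j]? = some (τ j)) ∧
    (∀ j : Fin k, E.pstate φ (W.take (g j)) = p j.castSucc) ∧
    (∀ j : Fin k, E.pstate φ (W.take (g j + 1)) = p j.succ) ∧
    E.pstate φ W = p (Fin.last k) ∧
    ∀ i < W.length, (∀ j : Fin k, g j ≠ i) →
      E.pstate φ (W.take (i + 1)) = E.pstate φ (W.take i)

end EmbeddingOrder

open EmbeddingOrder

/-!
Reading a word letter by letter, the prefix state stays put on loop symbols and increases on
transition symbols. The words with a given transition path and given transition symbols therefore
factor uniquely as `B₀ t₁ B₁ ⋯ t_k B_k`, and their generating function is a monomial times the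
product of the loop block series `1 / (1 - ∑ x ^ w a)`, the sum over the loop alphabet. Rescaled
to radius of convergence `1` for the largest growth rate on the path, a block of smaller growth rate
has summable coefficients. A dominant block satisfies a renewal equation whose weights sum to `1`,
and since the letter `one` of weight `1` lies in every nonempty loop alphabet, its coefficients stay
between two positive constants, as for a simple pole. So the product behaves like a pole of order
`d_T`. The class is a finite union of such path classes, and the path of a word attaining `D` has
the maximal order of growth.
-/

section CoefficientGrowth

open PowerSeries

/-- Coefficientwise comparison of real power series. -/
def CoeffLE (F G : ℝ⟦X⟧) : Prop := ∀ n, coeff n F ≤ coeff n G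

lemma CoeffLE.mul {F F' G G' : ℝ⟦X⟧} (hF₀ : CoeffLE 0 F) (hG₀ : CoeffLE 0 G)
    (hF : CoeffLE F F') (hG : CoeffLE G G') : CoeffLE (F * G) (F' * G') := fun n => by
  simp only [coeff_mul]
  exact Finset.sum_le_sum fun x _ => mul_le_mul (hF _) (hG _) (by simpa using hG₀ x.2)
    ((by simpa using hF₀ x.1 : (0 : ℝ) ≤ _).trans (hF _))

lemma CoeffLE.mul_nonneg {F G : ℝ⟦X⟧} (hF : CoeffLE 0 F) (hG : CoeffLE 0 G) :
    CoeffLE 0 (F * G) := fun n => by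
  simp only [map_zero, coeff_mul]
  exact Finset.sum_nonneg fun x _ =>
    _root_.mul_nonneg (by simpa using hF x.1) (by simpa using hG x.2)

lemma CoeffLE.pow_nonneg {F : ℝ⟦X⟧} (hF : CoeffLE 0 F) (d : ℕ) : CoeffLE 0 (F ^ d) := by
  induction d with
  | zero => intro n; simp only [map_zero, pow_zero, coeff_one]; split_ifs <;> norm_num
  | succ d ih => rw [pow_succ]; exact ih.mul_nonneg hF

lemma coeffLE_zero_mk_one : CoeffLE 0 (PowerSeries.mk 1) := fun n => by simp

lemma coeffLE_zero_C_mul_X_pow {c : ℝ} (hc : 0 ≤ c) (m : ℕ) : CoeffLE 0 (C c * X ^ m) :=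
  fun n => by rw [coeff_C_mul_X_pow]; split_ifs <;> simp [hc]

lemma coeffLE_zero_rescale {F : ℝ⟦X⟧} {x : ℝ} (hx : 0 ≤ x) (hF : CoeffLE 0 F) :
    CoeffLE 0 (rescale x F) := fun n => by
  rw [map_zero, coeff_rescale]
  exact _root_.mul_nonneg (pow_nonneg hx n) (by simpa using hF n)

/-- The coefficients of `F` grow as they would for a function with a pole of order `d` at `1` and
no other singularity in the closed unit disc: up to a summable factor from above, and up to a
constant and a shift from below, `F` compares with `(1 - X)⁻ᵈ`. For `d = 0` this means that the
coefficients are nonnegative and summable, but not all zero. -/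
structure HasGrowthOrder (d : ℕ) (F : ℝ⟦X⟧) : Prop where
  lower : ∃ c > 0, ∃ m, CoeffLE (C c * X ^ m * PowerSeries.mk 1 ^ d) F
  upper : ∃ S : ℝ⟦X⟧,
    CoeffLE 0 S ∧ Summable (fun n => coeff n S) ∧ CoeffLE F (S * PowerSeries.mk 1 ^ d)

lemma HasGrowthOrder.nonneg {d : ℕ} {F : ℝ⟦X⟧} (hF : HasGrowthOrder d F) : CoeffLE 0 F := by
  obtain ⟨c, hc, m, h⟩ := hF.lower
  exact fun n => ((coeffLE_zero_C_mul_X_pow hc.le m).mul_nonneg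
    (coeffLE_zero_mk_one.pow_nonneg d) n).trans (h n)

lemma hasGrowthOrder_zero_of_summable {F : ℝ⟦X⟧} (hF₀ : CoeffLE 0 F)
    (hF : Summable fun n => coeff n F) {m : ℕ} (hm : 0 < coeff m F) : HasGrowthOrder 0 F where
  lower := by
    refine ⟨coeff m F, hm, m, fun n => ?_⟩
    rw [pow_zero, mul_one, coeff_C_mul_X_pow]
    split_ifs with hn
    · rw [hn]
    · simpa using hF₀ n
  upper := ⟨F, hF₀, hF, fun n => by simp⟩

lemma hasGrowthOrder_one_of_bounded {F : ℝ⟦X⟧} {c M : ℝ} (hc : 0 < c)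
    (hlower : ∀ n, c ≤ coeff n F) (hupper : ∀ n, coeff n F ≤ M) : HasGrowthOrder 1 F where
  lower := ⟨c, hc, 0, fun n => by simpa using hlower n⟩
  upper := by
    have hM : 0 ≤ M := hc.le.trans ((hlower 0).trans (hupper 0))
    refine ⟨C M, fun n => by simpa using coeffLE_zero_C_mul_X_pow hM 0 n, ?_,
      fun n => by simpa using hupper n⟩
    refine summable_of_ne_finset_zero (s := {0}) fun n hn => ?_
    rw [coeff_C, if_neg (by simpa using hn)]

lemma hasGrowthOrder_C_mul_X_pow {c : ℝ} (hc : 0 < c) (m : ℕ) :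
    HasGrowthOrder 0 (C c * X ^ m : ℝ⟦X⟧) :=
  hasGrowthOrder_zero_of_summable (m := m) (coeffLE_zero_C_mul_X_pow hc.le m)
    (summable_of_ne_finset_zero (s := {m}) fun n hn => by
      rw [coeff_C_mul_X_pow, if_neg (by simpa using hn)])
    (by simpa [coeff_C_mul_X_pow] using hc)

lemma HasGrowthOrder.mul {d d' : ℕ} {F F' : ℝ⟦X⟧} (hF : HasGrowthOrder d F)
    (hF' : HasGrowthOrder d' F') : HasGrowthOrder (d + d') (F * F') where
  lower := by
    obtain ⟨c, hc, m, h⟩ := hF.lower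
    obtain ⟨c', hc', m', h'⟩ := hF'.lower
    refine ⟨c * c', mul_pos hc hc', m + m', ?_⟩
    have hprod : C (c * c') * X ^ (m + m') * PowerSeries.mk 1 ^ (d + d') =
        C c * X ^ m * PowerSeries.mk 1 ^ d * (C c' * X ^ m' * PowerSeries.mk 1 ^ d') := by
      rw [map_mul]; ring
    rw [hprod]
    exact CoeffLE.mul
      ((coeffLE_zero_C_mul_X_pow hc.le m).mul_nonneg (coeffLE_zero_mk_one.pow_nonneg d))
      ((coeffLE_zero_C_mul_X_pow hc'.le m').mul_nonneg (coeffLE_zero_mk_one.pow_nonneg d')) h h'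
  upper := by
    obtain ⟨S, hS₀, hS, h⟩ := hF.upper
    obtain ⟨S', hS₀', hS', h'⟩ := hF'.upper
    refine ⟨S * S', hS₀.mul_nonneg hS₀', ?_, ?_⟩
    · simp only [coeff_mul]
      exact summable_sum_mul_antidiagonal_of_summable_mul
        (f := fun n => coeff n S) (g := fun n => coeff n S')
        (hS.mul_of_nonneg hS' (fun n => by simpa using hS₀ n) fun n => by simpa using hS₀' n)
    · rw [pow_add, mul_mul_mul_comm]
      exact CoeffLE.mul hF.nonneg hF'.nonneg h h'

lemma HasGrowthOrder.prod {ι : Type*} {s : Finset ι} {d : ι → ℕ} {F : ι → ℝ⟦X⟧}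
    (hF : ∀ i ∈ s, HasGrowthOrder (d i) (F i)) :
    HasGrowthOrder (∑ i ∈ s, d i) (∏ i ∈ s, F i) := by
  induction s using Finset.induction_on with
  | empty => simpa using hasGrowthOrder_C_mul_X_pow one_pos 0
  | insert i s hi ih =>
    rw [Finset.sum_insert hi, Finset.prod_insert hi]
    exact (hF i (Finset.mem_insert_self i s)).mul
      (ih fun j hj => hF j (Finset.mem_insert_of_mem hj))

lemma isTheta_choose_add_sub (d m : ℕ) :
    (fun n : ℕ => ((d + (n - m)).choose d : ℝ)) =Θ[atTop] fun n => (n : ℝ) ^ d := by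
  have hshift : Tendsto (fun n => d + (n - m)) atTop atTop :=
    tendsto_atTop_mono (fun n => Nat.le_add_left _ _) (tendsto_sub_atTop_nat m)
  have hequiv : (fun n : ℕ => ((d + (n - m) : ℕ) : ℝ)) ~[atTop] fun n => (n : ℝ) := by
    have hconst : (fun _ : ℕ => (d : ℝ) - m) =o[atTop] fun n => (n : ℝ) :=
      isLittleO_const_left.2 (Or.inr (tendsto_norm_atTop_atTop.comp tendsto_natCast_atTop_atTop))
    refine (IsEquivalent.refl.add_isLittleO hconst).congr_left ?_
    filter_upwards [eventually_ge_atTop m] with n hn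
    simp only [Pi.add_apply]
    push_cast [Nat.cast_sub hn]
    ring
  have hchoose := isTheta_choose d
  exact IsTheta.trans ⟨hchoose.1.comp_tendsto hshift, hchoose.2.comp_tendsto hshift⟩
    (hequiv.isTheta.pow d)

lemma HasGrowthOrder.isTheta {d : ℕ} {F : ℝ⟦X⟧} (hF : HasGrowthOrder d F) (hd : 0 < d) :
    (fun n => coeff n F) =Θ[atTop] fun n => (n : ℝ) ^ (d - 1) := by
  obtain ⟨d, rfl⟩ := Nat.exists_eq_add_of_lt hd
  simp only [zero_add, Nat.add_sub_cancel] at hF ⊢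
  obtain ⟨c, hc, m, hlower⟩ := hF.lower
  obtain ⟨S, hS₀, hS, hupper⟩ := hF.upper
  rw [mk_one_pow_eq_mk_choose_add] at hlower hupper
  have hS₀ (n) : 0 ≤ coeff n S := by simpa using hS₀ n
  constructor
  · refine IsBigO.trans (IsBigO.of_bound (∑' n, coeff n S) (Eventually.of_forall fun n => ?_))
      (isTheta_choose_add_sub d 0).1
    rw [Real.norm_of_nonneg (by simpa using hF.nonneg n), Real.norm_of_nonneg (by positivity)]
    calc coeff n F
      _ ≤ ∑ x ∈ Finset.HasAntidiagonal.antidiagonal n, coeff x.1 S * (d + x.2).choose d := by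
            simpa [coeff_mul] using hupper n
      _ ≤ ∑ x ∈ Finset.HasAntidiagonal.antidiagonal n, coeff x.1 S * (d + (n - 0)).choose d := by
            gcongr with x hx
            · exact hS₀ _
            · simpa using Finset.HasAntidiagonal.antidiagonal.snd_le hx
      _ = (∑ i ∈ Finset.range (n + 1), coeff i S) * (d + (n - 0)).choose d := by
            rw [← Finset.sum_mul, Finset.Nat.sum_antidiagonal_eq_sum_range_succ_mk]
      _ ≤ (∑' i, coeff i S) * (d + (n - 0)).choose d := by
            gcongr
            exact hS.sum_le_tsum _ fun i _ => hS₀ i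
  · refine (isTheta_choose_add_sub d m).2.trans (IsBigO.of_bound c⁻¹ ?_)
    filter_upwards [eventually_ge_atTop m] with n hn
    have hn' : c * ((d + (n - m)).choose d : ℝ) ≤ coeff n F := by
      simpa [mul_assoc, coeff_X_pow_mul', hn] using hlower n
    rw [Real.norm_of_nonneg (by positivity), Real.norm_of_nonneg (by simpa using hF.nonneg n),
      ← div_eq_inv_mul, le_div_iff₀' hc]
    exact hn'

section Renewal

variable {ι : Type*} [Fintype ι] {q : ι → ℝ} {v : ι → ℕ} {U : ℝ⟦X⟧}

lemma coeff_of_renewal (hU : U = 1 + (∑ a, C (q a) * X ^ v a) * U) {n : ℕ} (hn : n ≠ 0) :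
    coeff n U = ∑ a, if v a ≤ n then q a * coeff (n - v a) U else 0 := by
  conv_lhs => rw [hU]
  rw [map_add, coeff_one, if_neg hn, zero_add, Finset.sum_mul, map_sum]
  exact Finset.sum_congr rfl fun a _ => by rw [mul_assoc, coeff_C_mul, coeff_X_pow_mul', mul_ite,
    mul_zero]

lemma coeff_le_one_of_renewal (hU : U = 1 + (∑ a, C (q a) * X ^ v a) * U) (hv : ∀ a, 0 < v a)
    (hq₀ : ∀ a, 0 ≤ q a) (hq : ∑ a, q a ≤ 1) (n : ℕ) : coeff n U ≤ 1 := by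
  induction n using Nat.strong_induction_on with
  | _ n ih =>
  obtain rfl | hn := eq_or_ne n 0
  · rw [hU]
    simp [coeff_zero_eq_constantCoeff, (hv _).ne']
  · rw [coeff_of_renewal hU hn]
    refine (Finset.sum_le_sum fun a _ => ?_).trans hq
    split_ifs
    · exact mul_le_of_le_one_right (hq₀ a) (ih _ (Nat.sub_lt (Nat.pos_of_ne_zero hn) (hv a)))
    · exact hq₀ a

lemma exists_pos_le_coeff_of_renewal (hU : U = 1 + (∑ a, C (q a) * X ^ v a) * U)
    (hv : ∀ a, 0 < v a) (hq₀ : ∀ a, 0 ≤ q a) (hq : ∑ a, q a = 1) (hpos : ∀ n, 0 < coeff n U) :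
    ∃ c > 0, ∀ n, c ≤ coeff n U := by
  set M := Finset.univ.sup v
  obtain ⟨m, -, hm⟩ := (Finset.range (M + 1)).exists_min_image (fun n => coeff n U)
    ⟨0, by simp⟩
  refine ⟨coeff m U, hpos m, fun n => ?_⟩
  induction n using Nat.strong_induction_on with
  | _ n ih =>
  obtain hn | hn := Nat.lt_or_ge M n
  · have hn₀ : n ≠ 0 := by omega
    rw [coeff_of_renewal hU hn₀, ← one_mul (coeff m U), ← hq, Finset.sum_mul]
    refine Finset.sum_le_sum fun a _ => ?_
    rw [if_pos ((Finset.le_sup (Finset.mem_univ a)).trans hn.le)]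
    exact mul_le_mul_of_nonneg_left (ih _ (Nat.sub_lt (Nat.pos_of_ne_zero hn₀) (hv a))) (hq₀ a)
  · exact hm n (Finset.mem_range.2 (by omega))

end Renewal

end CoefficientGrowth

namespace EmbeddingOrder

section WordCounting

open PowerSeries Computability

variable {A : Type*} {w : A → ℕ}

lemma wt_append (U V : List A) : wt w (U ++ V) = wt w U + wt w V := by
  simp only [wt, List.map_append, List.sum_append]

lemma length_le_wt (hw : ∀ a, 0 < w a) (W : List A) : W.length ≤ wt w W := by
  simpa [wt] using List.length_le_sum_of_one_le (W.map w)
    (by simpa using fun a _ => Nat.succ_le_of_lt (hw a))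

lemma finite_setOf_wt_eq [Finite A] (hw : ∀ a, 0 < w a) (n : ℕ) :
    {W : List A | wt w W = n}.Finite :=
  (List.finite_length_le A n).subset fun W hW => (length_le_wt hw W).trans hW.le

lemma finite_setOf_mem_and_wt_eq [Finite A] (hw : ∀ a, 0 < w a) (S : Language A) (n : ℕ) :
    {W | W ∈ S ∧ wt w W = n}.Finite :=
  (finite_setOf_wt_eq hw n).subset fun _ hW => hW.2

/-- The weight generating function of a language, counting its words by weight. When some weight
is shared by infinitely many words of the language, `Set.ncard` counts them as `0`. -/
noncomputable def genFun (w : A → ℕ) (S : Language A) : ℝ⟦X⟧ :=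
  PowerSeries.mk fun n => ({W | W ∈ S ∧ wt w W = n}.ncard : ℝ)

lemma coeff_genFun (S : Language A) (n : ℕ) :
    coeff n (genFun w S) = {W | W ∈ S ∧ wt w W = n}.ncard := coeff_mk _ _

lemma coeffLE_zero_genFun (S : Language A) : CoeffLE 0 (genFun w S) := fun n => by
  simp [coeff_genFun]

lemma coeff_genFun_mono [Finite A] (hw : ∀ a, 0 < w a) {S T : Language A} (h : S ≤ T) :
    CoeffLE (genFun w S) (genFun w T) := fun n => by
  simp only [coeff_genFun, Nat.cast_le]
  exact Set.ncard_le_ncard (fun W hW => ⟨h hW.1, hW.2⟩) (finite_setOf_mem_and_wt_eq hw T n)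

lemma coeff_genFun_pos [Finite A] (hw : ∀ a, 0 < w a) {S : Language A} {W : List A}
    (hW : W ∈ S) : 0 < coeff (wt w W) (genFun w S) := by
  rw [coeff_genFun, Nat.cast_pos, Set.ncard_pos (finite_setOf_mem_and_wt_eq hw S _)]
  exact ⟨W, hW, rfl⟩

lemma genFun_singleton (W : List A) : genFun w ({W} : Language A) = X ^ wt w W := by
  ext n
  rw [coeff_genFun, coeff_X_pow]
  split_ifs with hn
  · have : {V | V ∈ ({W} : Language A) ∧ wt w V = n} = {W} :=
      Set.eq_singleton_iff_unique_mem.2 ⟨⟨rfl, hn.symm⟩, fun V hV => hV.1⟩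
    rw [this, Set.ncard_singleton, Nat.cast_one]
  · have : {V | V ∈ ({W} : Language A) ∧ wt w V = n} = ∅ :=
      Set.eq_empty_of_forall_notMem fun V ⟨hV, hn'⟩ => hn (hn'.symm.trans (congrArg _ hV))
    rw [this, Set.ncard_empty, Nat.cast_zero]

lemma genFun_add_of_disjoint [Finite A] (hw : ∀ a, 0 < w a) {S T : Language A}
    (h : ∀ W ∈ S, W ∉ T) : genFun w (S + T) = genFun w S + genFun w T := by
  ext n
  have hunion : {W | W ∈ S + T ∧ wt w W = n} =
      {W | W ∈ S ∧ wt w W = n} ∪ {W | W ∈ T ∧ wt w W = n} :=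
    Set.ext fun W => or_and_right
  rw [map_add, coeff_genFun, coeff_genFun, coeff_genFun, hunion,
    Set.ncard_union_eq (Set.disjoint_left.2 fun W hS hT => h W hS.1 hT.1)
      (finite_setOf_mem_and_wt_eq hw S n) (finite_setOf_mem_and_wt_eq hw T n), Nat.cast_add]

/-- The product of the languages `S` and `T` is unambiguous: each of its words has only one
factorization into a word of `S` followed by a word of `T`. -/
def Unambiguous (S T : Language A) : Prop :=
  ∀ U ∈ S, ∀ U' ∈ S, ∀ V ∈ T, ∀ V' ∈ T, U ++ V = U' ++ V' → U = U'

lemma Unambiguous.ncard_mul {S T : Language A} (h : Unambiguous S T) (n : ℕ) :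
    {W | W ∈ S * T ∧ wt w W = n}.ncard =
      {x : List A × List A | x.1 ∈ S ∧ x.2 ∈ T ∧ wt w x.1 + wt w x.2 = n}.ncard := by
  have hinj : Set.InjOn (fun x : List A × List A => x.1 ++ x.2)
      {x | x.1 ∈ S ∧ x.2 ∈ T ∧ wt w x.1 + wt w x.2 = n} := by
    rintro ⟨U, V⟩ ⟨hU, hV, -⟩ ⟨U', V'⟩ ⟨hU', hV', -⟩ (heq : U ++ V = U' ++ V')
    obtain rfl := h U hU U' hU' V hV V' hV' heq
    rw [List.append_cancel_left heq]
  rw [← hinj.ncard_image]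
  congr 1
  ext W
  constructor
  · rintro ⟨⟨U, hU, V, hV, rfl⟩, hn⟩
    exact ⟨(U, V), ⟨hU, hV, (wt_append U V).symm.trans hn⟩, rfl⟩
  · rintro ⟨⟨U, V⟩, ⟨hU, hV, hn⟩, rfl⟩
    exact ⟨⟨U, hU, V, hV, rfl⟩, (wt_append U V).trans hn⟩

lemma genFun_mul [Finite A] (hw : ∀ a, 0 < w a) {S T : Language A} (h : Unambiguous S T) :
    genFun w (S * T) = genFun w S * genFun w T := by
  ext n
  let box (x : ℕ × ℕ) : Set (List A × List A) :=
    {U | U ∈ S ∧ wt w U = x.1} ×ˢ {V | V ∈ T ∧ wt w V = x.2}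
  have hfin (x) : (box x).Finite :=
    (finite_setOf_mem_and_wt_eq hw S _).prod (finite_setOf_mem_and_wt_eq hw T _)
  have hunion : {y : List A × List A | y.1 ∈ S ∧ y.2 ∈ T ∧ wt w y.1 + wt w y.2 = n} =
      ⋃ x ∈ (Finset.HasAntidiagonal.antidiagonal n : Set (ℕ × ℕ)), box x := by
    ext ⟨U, V⟩
    simp only [box, Set.mem_iUnion, Set.mem_prod, Set.mem_ofPred_eq, Finset.mem_coe,
      Finset.HasAntidiagonal.mem_antidiagonal]
    constructor
    · rintro ⟨hU, hV, hn⟩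
      exact ⟨(wt w U, wt w V), hn, ⟨hU, rfl⟩, hV, rfl⟩
    · rintro ⟨x, hn, ⟨hU, hU'⟩, hV, hV'⟩
      exact ⟨hU, hV, by rw [hU', hV', hn]⟩
  have hdisj : (Finset.HasAntidiagonal.antidiagonal n : Set (ℕ × ℕ)).PairwiseDisjoint box :=
    fun x _ y _ hxy => Set.disjoint_left.2 fun z hx hy =>
      hxy (Prod.ext (hx.1.2.symm.trans hy.1.2) (hx.2.2.symm.trans hy.2.2))
  rw [coeff_genFun, h.ncard_mul, hunion, (Finset.finite_toSet _).ncard_biUnion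
    (fun x _ => hfin x) hdisj, finsum_mem_coe_finset]
  simp only [box, Set.ncard_prod, coeff_mul, coeff_genFun, Nat.cast_sum, Nat.cast_mul]

/-- The one-letter words over the letters of `L`; the loop blocks over `L` are the words of
`(letters L)∗`. -/
def letters (L : Set A) : Language A := (fun a => [a]) '' L

lemma mem_kstar_letters {L : Set A} {W : List A} : W ∈ (letters L)∗ ↔ ∀ a ∈ W, a ∈ L := by
  rw [Language.mem_kstar]
  constructor
  · rintro ⟨Ws, rfl, hWs⟩ a ha
    obtain ⟨W, hW, ha⟩ := List.mem_flatten.1 ha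
    obtain ⟨b, hb, rfl⟩ := hWs W hW
    rwa [List.mem_singleton.1 ha]
  · refine fun hW => ⟨W.map fun a => [a], by simp [← List.flatMap_def], fun V hV => ?_⟩
    obtain ⟨a, ha, rfl⟩ := List.mem_map.1 hV
    exact ⟨a, hW a ha, rfl⟩

lemma genFun_letters {L : Set A} [Fintype L] : genFun w (letters L) = ∑ a : L, X ^ w a := by
  ext n
  have hfibre : {W | W ∈ letters L ∧ wt w W = n} =
      (fun a : L => [(a : A)]) '' {a | n = w a} := by
    ext W
    constructor
    · rintro ⟨⟨a, ha, rfl⟩, hn⟩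
      exact ⟨⟨a, ha⟩, by simpa [wt] using hn.symm, rfl⟩
    · rintro ⟨a, ha, rfl⟩
      exact ⟨⟨a, a.2, rfl⟩, by simpa [wt] using ha.symm⟩
  have hinj : Function.Injective fun a : L => [(a : A)] :=
    fun a b hab => Subtype.ext (List.singleton_inj.1 hab)
  rw [coeff_genFun, hfibre, Set.ncard_image_of_injective _ hinj, Set.ncard_eq_toFinset_card']
  simp [coeff_X_pow, Finset.sum_boole]

lemma genFun_one : genFun w (1 : Language A) = 1 := genFun_singleton []

lemma genFun_kstar_letters [Finite A] (hw : ∀ a, 0 < w a) {L : Set A} [Fintype L] :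
    genFun w (letters L)∗ = 1 + (∑ a : L, X ^ w a) * genFun w (letters L)∗ := by
  have hunamb : Unambiguous (letters L) (letters L)∗ := by
    rintro _ ⟨a, -, rfl⟩ _ ⟨b, -, rfl⟩ V - V' - h
    simpa using (List.cons.inj h).1
  conv_lhs => rw [← Language.one_add_self_mul_kstar_eq_kstar]
  rw [genFun_add_of_disjoint hw, genFun_mul hw hunamb, genFun_letters, genFun_one]
  rintro W rfl hW
  obtain ⟨_, ⟨a, -, rfl⟩, V, -, h⟩ := Language.mem_mul.1 hW
  simp at h

end WordCounting

section LoopBlocks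

open PowerSeries Computability

variable {A : Type*} {w : A → ℕ} {L : Set A}

-- `rhoOf w ∅` is the supremum of an unbounded set, hence `0`, and so is its inverse.
lemma growthOf_empty : growthOf w (∅ : Set A) = 0 := by
  have hunbdd : ¬ BddAbove {x : ℝ | 0 ≤ x ∧ ∑' a : (∅ : Set A), x ^ w (a : A) ≤ 1} := by
    simpa [Set.Ici] using not_bddAbove_Ici (0 : ℝ)
  rw [growthOf, rhoOf, Real.sSup_of_not_bddAbove hunbdd, inv_zero]

lemma growthOf_nonneg : 0 ≤ growthOf w L :=
  inv_nonneg.2 (Real.sSup_nonneg fun _ hx => hx.1)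

lemma exists_sum_pow_eq_one [Fintype L] (hw : ∀ a, 0 < w a) (hL : L.Nonempty) :
    ∃ x : ℝ, 0 < x ∧ ∑ a : L, x ^ w a = 1 := by
  have : Nonempty L := hL.to_subtype
  have hcont : ContinuousOn (fun x : ℝ => ∑ a : L, x ^ w a) (Set.Icc 0 1) := by fun_prop
  have hzero : ∑ a : L, (0 : ℝ) ^ w a = 0 :=
    Finset.sum_eq_zero fun a _ => zero_pow (hw a).ne'
  have hone : (1 : ℝ) ≤ ∑ a : L, (1 : ℝ) ^ w a := by
    simpa using Nat.succ_le_of_lt (Fintype.card_pos (α := L))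
  obtain ⟨x, hx, hx₁⟩ := intermediate_value_Icc zero_le_one hcont
    (Set.mem_Icc.2 ⟨hzero.trans_le zero_le_one, hone⟩)
  refine ⟨x, hx.1.lt_of_ne' ?_, hx₁⟩
  rintro rfl
  exact zero_ne_one (hzero.symm.trans hx₁)

lemma rhoOf_eq [Fintype L] (hw : ∀ a, 0 < w a) {x : ℝ} (hx : 0 < x)
    (hx₁ : ∑ a : L, x ^ w a = 1) : rhoOf w L = x := by
  have hL : (Finset.univ : Finset L).Nonempty := Finset.nonempty_of_sum_ne_zero (hx₁ ▸ one_ne_zero)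
  refine IsGreatest.csSup_eq ⟨⟨hx.le, by rw [tsum_fintype, hx₁]⟩, fun y ⟨_, hy₁⟩ => ?_⟩
  rw [tsum_fintype, ← hx₁] at hy₁
  by_contra! hxy
  exact hy₁.not_gt (Finset.sum_lt_sum_of_nonempty hL fun a _ =>
    pow_lt_pow_left₀ hxy hx.le (hw a).ne')

lemma growthOf_pos_and_sum_eq_one [Fintype L] (hw : ∀ a, 0 < w a) (hL : L.Nonempty) :
    0 < growthOf w L ∧ ∑ a : L, (growthOf w L)⁻¹ ^ w a = 1 := by
  obtain ⟨x, hx, hx₁⟩ := exists_sum_pow_eq_one hw hL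
  rw [growthOf, rhoOf_eq hw hx hx₁, inv_inv]
  exact ⟨inv_pos.2 hx, hx₁⟩

lemma growthOf_eq_zero_iff [Finite A] (hw : ∀ a, 0 < w a) : growthOf w L = 0 ↔ L = ∅ := by
  refine ⟨fun h => ?_, fun h => h ▸ growthOf_empty⟩
  have := Fintype.ofFinite L
  by_contra hL
  exact (growthOf_pos_and_sum_eq_one hw (Set.nonempty_iff_ne_empty.2 hL)).1.ne' h

lemma rescale_genFun_kstar_letters [Finite A] [Fintype L] (hw : ∀ a, 0 < w a) (x : ℝ) :
    rescale x (genFun w (letters L)∗) =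
      1 + (∑ a : L, C (x ^ w a) * X ^ w a) * rescale x (genFun w (letters L)∗) := by
  conv_lhs => rw [genFun_kstar_letters hw]
  simp only [map_add, map_one, map_mul, map_sum, map_pow, rescale_X, mul_pow]

lemma genFun_kstar_letters_empty [Finite A] (hw : ∀ a, 0 < w a) :
    genFun w (letters (∅ : Set A))∗ = 1 := by
  rw [genFun_kstar_letters hw, Finset.univ_eq_empty, Finset.sum_empty, zero_mul, add_zero]

lemma coeff_genFun_kstar_letters_le [Finite A] (hw : ∀ a, 0 < w a) (n : ℕ) :
    coeff n (genFun w (letters L)∗) ≤ growthOf w L ^ n := by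
  have := Fintype.ofFinite L
  obtain rfl | hL := L.eq_empty_or_nonempty
  · rw [genFun_kstar_letters_empty hw, growthOf_empty, coeff_one, zero_pow_eq]
  · obtain ⟨hpos, hsum⟩ := growthOf_pos_and_sum_eq_one hw hL
    have hle := coeff_le_one_of_renewal (rescale_genFun_kstar_letters hw _) (fun a => hw a)
      (fun a => by positivity) hsum.le n
    rwa [coeff_rescale, inv_pow, inv_mul_le_one₀ (by positivity)] at hle

lemma hasGrowthOrder_zero_kstar_letters [Finite A] (hw : ∀ a, 0 < w a) {γ : ℝ}
    (hγ : growthOf w L < γ) :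
    HasGrowthOrder 0 (rescale γ⁻¹ (genFun w (letters L)∗)) := by
  have hγ₀ : 0 < γ := growthOf_nonneg.trans_lt hγ
  have hnil : [] ∈ (letters L)∗ := mem_kstar_letters.2 (by simp)
  have hnonneg : CoeffLE 0 (rescale γ⁻¹ (genFun w (letters L)∗)) :=
    coeffLE_zero_rescale (inv_nonneg.2 hγ₀.le) (coeffLE_zero_genFun _)
  have hgeom : Summable fun n => (growthOf w L / γ) ^ n :=
    summable_geometric_of_lt_one (div_nonneg growthOf_nonneg hγ₀.le) ((div_lt_one hγ₀).2 hγ)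
  refine hasGrowthOrder_zero_of_summable (m := 0) hnonneg
    (hgeom.of_nonneg_of_le (fun n => by simpa using hnonneg n) fun n => ?_) ?_
  · rw [coeff_rescale, div_pow, inv_pow, div_eq_inv_mul]
    gcongr
    exact coeff_genFun_kstar_letters_le hw n
  · simpa [coeff_rescale, wt] using coeff_genFun_pos hw hnil

lemma hasGrowthOrder_one_kstar_letters [Finite A] (hw : ∀ a, 0 < w a) {one : A} (hone : w one = 1)
    (hmem : one ∈ L) :
    HasGrowthOrder 1 (rescale (growthOf w L)⁻¹ (genFun w (letters L)∗)) := by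
  have := Fintype.ofFinite L
  obtain ⟨hpos, hsum⟩ := growthOf_pos_and_sum_eq_one hw ⟨one, hmem⟩
  have hrenewal := rescale_genFun_kstar_letters (L := L) hw (growthOf w L)⁻¹
  have hcoeff (n : ℕ) : 0 < coeff n (rescale (growthOf w L)⁻¹ (genFun w (letters L)∗)) := by
    have hword : List.replicate n one ∈ (letters L)∗ :=
      mem_kstar_letters.2 fun a ha => List.eq_of_mem_replicate ha ▸ hmem
    have hwt : wt w (List.replicate n one) = n := by simp [wt, hone]
    rw [coeff_rescale]
    exact mul_pos (by positivity) (hwt ▸ coeff_genFun_pos hw hword)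
  obtain ⟨c, hc, hlower⟩ := exists_pos_le_coeff_of_renewal hrenewal (fun a => hw a)
    (fun a => by positivity) hsum hcoeff
  exact hasGrowthOrder_one_of_bounded hc hlower
    (coeff_le_one_of_renewal hrenewal (fun a => hw a) (fun a => by positivity) hsum.le)

end LoopBlocks

section PrefixStates

variable {A : Type*} {w : A → ℕ} (E : EmbeddingOrder A w) {f : ℕ} (φ : Fin f → List A)

lemma le_append {U V X Y : List A} (hU : E.le U X) (hV : E.le V Y) :
    E.le (U ++ V) (X ++ Y) := by
  rw [E.le_iff_factor] at hU hV ⊢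
  obtain ⟨Us, hUs, rfl, hUX⟩ := hU
  obtain ⟨Vs, hVs, rfl, hVY⟩ := hV
  refine ⟨Us ++ Vs, by simp [hUs, hVs], List.flatten_append, fun q hq => ?_⟩
  rw [List.zip_append hUs] at hq
  exact (List.mem_append.1 hq).elim (hUX q) (hVY q)

lemma exists_eq_append_of_le_append {W X Y : List A} (h : E.le W (X ++ Y)) :
    ∃ U V, W = U ++ V ∧ E.le U X ∧ E.le V Y := by
  obtain ⟨Ws, hlength, hW, hle⟩ := (E.le_iff_factor _ _).1 h
  have htake : (Ws.take X.length).length = X.length := by simp [hlength]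
  have hzip : Ws.zip (X ++ Y) = (Ws.take X.length).zip X ++ (Ws.drop X.length).zip Y := by
    rw [← List.zip_append htake, List.take_append_drop]
  rw [hzip] at hle
  refine ⟨(Ws.take X.length).flatten, (Ws.drop X.length).flatten, ?_, ?_, ?_⟩
  · rw [← List.flatten_append, List.take_append_drop, hW]
  · exact (E.le_iff_factor _ _).2 ⟨_, htake, rfl, fun q hq => hle q (List.mem_append_left _ hq)⟩
  · exact (E.le_iff_factor _ _).2
      ⟨_, by simp [hlength], rfl, fun q hq => hle q (List.mem_append_right _ hq)⟩

lemma le_append_right (X Y : List A) : E.le X (X ++ Y) := by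
  simpa using E.le_append (E.le_refl X) (E.nil_le Y)

lemma le_of_isPrefix {X Y : List A} (h : X <+: Y) : E.le X Y := by
  obtain ⟨Z, rfl⟩ := h
  exact E.le_append_right X Z

variable {φ} in
lemma isGreatest_pstate (W : List A) (i : Fin f) :
    IsGreatest {q | q ≤ (φ i).length ∧ E.le ((φ i).take q) W} (E.pstate φ W i) :=
  have hbdd : BddAbove {q | q ≤ (φ i).length ∧ E.le ((φ i).take q) W} :=
    ⟨(φ i).length, fun _ hq => hq.1⟩
  ⟨Nat.sSup_mem ⟨0, by simp [E.nil_le]⟩ hbdd, fun _ hq => le_csSup hbdd hq⟩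

variable {φ} in
lemma take_le_iff_le_pstate {W : List A} {i : Fin f} {q : ℕ} (hq : q ≤ (φ i).length) :
    E.le ((φ i).take q) W ↔ q ≤ E.pstate φ W i :=
  ⟨fun h => (E.isGreatest_pstate W i).2 ⟨hq, h⟩, fun h =>
    E.le_trans (E.le_of_isPrefix (List.take_prefix_take_left h)) (E.isGreatest_pstate W i).1.2⟩

lemma pstate_le_length (W : List A) (i : Fin f) : E.pstate φ W i ≤ (φ i).length :=
  (E.isGreatest_pstate W i).1.1

lemma pstate_mono {X Y : List A} (h : E.le X Y) : E.pstate φ X ≤ E.pstate φ Y := fun i =>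
  have hX := E.isGreatest_pstate (φ := φ) X i
  (E.take_le_iff_le_pstate hX.1.1).1 (E.le_trans hX.1.2 h)

-- A prefix of `φ i` contained in `X ++ Y` splits as `U ++ V` with `U` in `X` and `V` in `Y`, and
-- `U`, being a prefix of `φ i` itself, is contained in every word with the state of `X`.
lemma pstate_append_le {X X' : List A} (h : E.pstate φ X = E.pstate φ X') (Y : List A) :
    E.pstate φ (X ++ Y) ≤ E.pstate φ (X' ++ Y) := fun i => by
  obtain ⟨⟨hlength, hle⟩, -⟩ := E.isGreatest_pstate (φ := φ) (X ++ Y) i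
  obtain ⟨U, V, hUV, hU, hV⟩ := E.exists_eq_append_of_le_append hle
  have hpre : U <+: φ i :=
    (hUV ▸ List.prefix_append U V : U <+: _).trans (List.take_prefix _ _)
  rw [← E.take_le_iff_le_pstate hlength, hUV]
  refine E.le_append ?_ hV
  rw [List.prefix_iff_eq_take.1 hpre] at hU ⊢
  rwa [E.take_le_iff_le_pstate hpre.length_le, ← h,
    ← E.take_le_iff_le_pstate hpre.length_le]

lemma pstate_append_congr {X X' : List A} (h : E.pstate φ X = E.pstate φ X') (Y : List A) :
    E.pstate φ (X ++ Y) = E.pstate φ (X' ++ Y) :=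
  (E.pstate_append_le φ h Y).antisymm (E.pstate_append_le φ h.symm Y)

lemma mem_Cset_iff {W : List A} : W ∈ E.Cset φ ↔ ∀ i, E.pstate φ W i < (φ i).length := by
  refine forall_congr' fun i => ?_
  rw [← not_le, ← E.take_le_iff_le_pstate le_rfl, List.take_length]

lemma mem_stateLoopP_iff {X : List A} {a : A} :
    a ∈ E.stateLoopP φ (E.pstate φ X) ↔ E.pstate φ (X ++ [a]) = E.pstate φ X :=
  ⟨fun h => h X rfl, fun h _ hY => (E.pstate_append_congr φ hY [a]).trans h⟩

lemma one_mem_stateLoopP {one : A} (hone_le : ∀ a : A, E.le [one] [a]) {q : Fin f → ℕ}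
    (h : (E.stateLoopP φ q).Nonempty) : one ∈ E.stateLoopP φ q := by
  obtain ⟨a, ha⟩ := h
  intro X hX
  have hlower : q ≤ E.pstate φ (X ++ [one]) :=
    hX.symm.trans_le (E.pstate_mono φ (E.le_append_right X _))
  have hupper : E.pstate φ (X ++ [one]) ≤ q :=
    (E.pstate_mono φ (E.le_append (E.le_refl X) (hone_le a))).trans_eq (ha X hX)
  exact hupper.antisymm hlower

lemma pstate_append_eq_iff {X B : List A} :
    E.pstate φ (X ++ B) = E.pstate φ X ↔ ∀ b ∈ B, b ∈ E.stateLoopP φ (E.pstate φ X) := by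
  induction B using List.reverseRecOn with
  | nil => simp
  | append_singleton B b ih =>
    rw [← List.append_assoc]
    constructor
    · intro h
      have hB : E.pstate φ (X ++ B) = E.pstate φ X :=
        ((E.pstate_mono φ (E.le_append_right (X ++ B) [b])).trans_eq h).antisymm
          (E.pstate_mono φ (E.le_append_right X B))
      have hb : b ∈ E.stateLoopP φ (E.pstate φ X) :=
        hB ▸ (E.mem_stateLoopP_iff φ).2 (h.trans hB.symm)
      exact List.forall_mem_append.2 ⟨ih.1 hB, by simpa using hb⟩
    · rw [List.forall_mem_append]
      exact fun h => h.2 b (List.mem_singleton_self b) _ (ih.2 h.1)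

end PrefixStates

section TransitionPaths

open PowerSeries Computability

variable {A : Type*} {w : A → ℕ} (E : EmbeddingOrder A w) {f : ℕ} (φ : Fin f → List A) {k : ℕ}

/-- A prefix transition path `T = (p 0 < p 1 < ⋯ < p k)` of valid states starting at the initial
state, together with transition symbols `τ j` from `p j` to `p (j + 1)`. -/
structure IsTransitionPath (p : Fin (k + 1) → Fin f → ℕ) (τ : Fin k → A) : Prop where
  start : E.pstate φ [] = p 0
  valid : ∀ j i, p j i < (φ i).length
  lt : ∀ j : Fin k, p j.castSucc < p j.succ
  step : ∀ j : Fin k, ∀ X : List A, E.pstate φ X = p j.castSucc →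
    E.pstate φ (X ++ [τ j]) = p j.succ

/-- The transitions of `W` are the letters `τ j` at the positions `g j`, leading from the state
`p j` to the state `p (j + 1)`: the condition that `Realizes` imposes on the positions. -/
structure TransitionsAt (p : Fin (k + 1) → Fin f → ℕ) (τ : Fin k → A) (W : List A)
    (g : Fin k → ℕ) : Prop where
  strictMono : StrictMono g
  lt_length : ∀ j, g j < W.length
  getElem?_eq : ∀ j, W[g j]? = some (τ j)
  pstate_before : ∀ j, E.pstate φ (W.take (g j)) = p j.castSucc
  pstate_after : ∀ j, E.pstate φ (W.take (g j + 1)) = p j.succ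
  pstate_eq : E.pstate φ W = p (Fin.last k)
  pstate_const : ∀ i < W.length, (∀ j, g j ≠ i) →
    E.pstate φ (W.take (i + 1)) = E.pstate φ (W.take i)

variable {E φ}

lemma realizes_iff {p : Fin (k + 1) → Fin f → ℕ} {τ : Fin k → A} {W : List A} :
    E.Realizes φ p τ W ↔ ∃ g, E.TransitionsAt φ p τ W g :=
  exists_congr fun _ => ⟨fun ⟨h₁, h₂, h₃, h₄, h₅, h₆, h₇⟩ => ⟨h₁, h₂, h₃, h₄, h₅, h₆, h₇⟩,
    fun h => ⟨h.1, h.2, h.3, h.4, h.5, h.6, h.7⟩⟩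

lemma Realizes.pstate_eq {p : Fin (k + 1) → Fin f → ℕ} {τ : Fin k → A} {W : List A}
    (h : E.Realizes φ p τ W) : E.pstate φ W = p (Fin.last k) :=
  (realizes_iff.1 h).choose_spec.pstate_eq

lemma TransitionsAt.append_loop {p : Fin (k + 1) → Fin f → ℕ} {τ : Fin k → A} {W B : List A}
    {g : Fin k → ℕ} (h : E.TransitionsAt φ p τ W g)
    (hB : ∀ b ∈ B, b ∈ E.stateLoopP φ (p (Fin.last k))) :
    E.TransitionsAt φ p τ (W ++ B) g := by
  have htake (j) {i : ℕ} (hi : i ≤ g j + 1) : (W ++ B).take i = W.take i :=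
    List.take_append_of_le_length (hi.trans (h.lt_length j))
  have hloop (i : ℕ) : E.pstate φ (W ++ B.take i) = E.pstate φ W :=
    (E.pstate_append_eq_iff φ).2 fun b hb => h.pstate_eq ▸ hB b (List.mem_of_mem_take hb)
  refine ⟨h.strictMono, fun j => ?_, fun j => ?_, fun j => ?_, fun j => ?_, ?_, fun i _ hg => ?_⟩
  · exact (h.lt_length j).trans_le (by simp)
  · rw [List.getElem?_append_left (h.lt_length j), h.getElem?_eq]
  · rw [htake j (Nat.le_succ _), h.pstate_before]
  · rw [htake j le_rfl, h.pstate_after]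
  · rw [← h.pstate_eq, ← hloop B.length, List.take_length]
  · obtain hlt | hge := Nat.lt_or_ge i W.length
    · rw [List.take_append_of_le_length hlt, List.take_append_of_le_length hlt.le,
        h.pstate_const i hlt hg]
    · rw [List.take_append, List.take_append, List.take_of_length_le hge,
        List.take_of_length_le (hge.trans (Nat.le_succ i)), hloop, hloop]

lemma strictMono_snoc {α : Type*} [Preorder α] {g : Fin k → α} (hg : StrictMono g) {m : α}
    (hm : ∀ j, g j < m) : StrictMono (Fin.snoc (α := fun _ => α) g m) := by
  intro i j hij
  obtain ⟨i, rfl⟩ := Fin.exists_castSucc_eq.2 (hij.trans_le (Fin.le_last j)).ne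
  induction j using Fin.lastCases with
  | last => simpa using hm i
  | cast j => simpa using hg (by simpa using hij)

lemma TransitionsAt.append_transition {p : Fin (k + 2) → Fin f → ℕ} {τ : Fin (k + 1) → A}
    {W : List A} {g : Fin k → ℕ}
    (h : E.TransitionsAt φ (p ∘ Fin.castSucc) (τ ∘ Fin.castSucc) W g)
    (hlast : E.pstate φ (W ++ [τ (Fin.last k)]) = p (Fin.last (k + 1))) :
    E.TransitionsAt φ p τ (W ++ [τ (Fin.last k)]) (Fin.snoc (α := fun _ => ℕ) g W.length) := by
  have htake (j) {i : ℕ} (hi : i ≤ g j + 1) : (W ++ [τ (Fin.last k)]).take i = W.take i :=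
    List.take_append_of_le_length (hi.trans (h.lt_length j))
  refine ⟨strictMono_snoc h.strictMono h.lt_length, ?_, ?_, ?_, ?_, hlast, fun i hi hg => ?_⟩
  · refine Fin.forall_fin_succ'.2 ⟨fun j => ?_, by simp⟩
    rw [Fin.snoc_castSucc]
    exact (h.lt_length j).trans_le (by simp)
  · refine Fin.forall_fin_succ'.2 ⟨fun j => ?_, by simp⟩
    rw [Fin.snoc_castSucc, List.getElem?_append_left (h.lt_length j)]
    exact h.getElem?_eq j
  · refine Fin.forall_fin_succ'.2 ⟨fun j => ?_, ?_⟩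
    · rw [Fin.snoc_castSucc, htake j (Nat.le_succ _)]
      exact h.pstate_before j
    · rw [Fin.snoc_last, List.take_left]
      exact h.pstate_eq
  · refine Fin.forall_fin_succ'.2 ⟨fun j => ?_, ?_⟩
    · rw [Fin.snoc_castSucc, htake j le_rfl]
      exact h.pstate_after j
    · rw [Fin.snoc_last, List.take_of_length_le (by simp)]
      exact hlast
  · obtain ⟨hg, hne⟩ := Fin.forall_fin_succ'.1 hg
    simp only [Fin.snoc_castSucc, Fin.snoc_last] at hg hne
    have hlt : i < W.length := lt_of_le_of_ne (by simpa [Nat.lt_succ_iff] using hi) hne.symm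
    rw [List.take_append_of_le_length hlt, List.take_append_of_le_length hlt.le,
      h.pstate_const i hlt hg]

lemma TransitionsAt.take_last {p : Fin (k + 2) → Fin f → ℕ} {τ : Fin (k + 1) → A}
    {W : List A} {g : Fin (k + 1) → ℕ} (h : E.TransitionsAt φ p τ W g) :
    E.TransitionsAt φ (p ∘ Fin.castSucc) (τ ∘ Fin.castSucc) (W.take (g (Fin.last k)))
      (g ∘ Fin.castSucc) := by
  have hlt (j : Fin k) : g j.castSucc < g (Fin.last k) := h.strictMono (Fin.castSucc_lt_last j)
  have htake {i : ℕ} (hi : i ≤ g (Fin.last k)) : (W.take (g (Fin.last k))).take i = W.take i := by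
    rw [List.take_take, min_eq_left hi]
  refine ⟨h.strictMono.comp Fin.strictMono_castSucc, fun j => ?_, fun j => ?_, fun j => ?_,
    fun j => ?_, h.pstate_before (Fin.last k), fun i hi hg => ?_⟩
  · exact (hlt j).trans_eq (List.length_take_of_le (h.lt_length _).le).symm
  · exact (List.getElem?_take_of_lt (hlt j)).trans (h.getElem?_eq _)
  · exact (congrArg _ (htake (hlt j).le)).trans (h.pstate_before _)
  · exact (congrArg _ (htake (hlt j))).trans (h.pstate_after _)
  · rw [List.length_take_of_le (h.lt_length _).le] at hi
    rw [htake hi, htake hi.le]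
    exact h.pstate_const i (hi.trans (h.lt_length _)) (Fin.forall_fin_succ'.2 ⟨hg, hi.ne'⟩)

variable (E φ) in
/-- The words of `C` with prefix transition path `p` whose transitions occur on the symbols `τ`. -/
def pathWords (p : Fin (k + 1) → Fin f → ℕ) (τ : Fin k → A) : Language A :=
  {W | E.Realizes φ p τ W}

lemma mem_pathWords_append_loop {p : Fin (k + 1) → Fin f → ℕ} {τ : Fin k → A} {W B : List A}
    (hW : W ∈ E.pathWords φ p τ) (hB : B ∈ (letters (E.stateLoopP φ (p (Fin.last k))))∗) :
    W ++ B ∈ E.pathWords φ p τ := by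
  obtain ⟨g, hg⟩ := realizes_iff.1 hW
  exact realizes_iff.2 ⟨g, hg.append_loop (mem_kstar_letters.1 hB)⟩

lemma mem_pathWords_append_transition {p : Fin (k + 2) → Fin f → ℕ} {τ : Fin (k + 1) → A}
    {W : List A} (hW : W ∈ E.pathWords φ (p ∘ Fin.castSucc) (τ ∘ Fin.castSucc))
    (hlast : E.pstate φ (W ++ [τ (Fin.last k)]) = p (Fin.last (k + 1))) :
    W ++ [τ (Fin.last k)] ∈ E.pathWords φ p τ := by
  obtain ⟨g, hg⟩ := realizes_iff.1 hW
  exact realizes_iff.2 ⟨_, hg.append_transition hlast⟩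

lemma nil_mem_pathWords {p : Fin 1 → Fin f → ℕ} (τ : Fin 0 → A) (hp : E.pstate φ [] = p 0) :
    [] ∈ E.pathWords φ p τ :=
  realizes_iff.2 ⟨Fin.elim0, ⟨fun j => j.elim0, fun j => j.elim0, fun j => j.elim0,
    fun j => j.elim0, fun j => j.elim0, hp, by simp⟩⟩

lemma pathWords_zero {p : Fin 1 → Fin f → ℕ} {τ : Fin 0 → A} (hp : E.pstate φ [] = p 0) :
    E.pathWords φ p τ = (letters (E.stateLoopP φ (p 0)))∗ := by
  refine Set.Subset.antisymm (fun W hW => ?_) fun W hW =>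
    mem_pathWords_append_loop (nil_mem_pathWords τ hp) hW
  rw [← hp]
  exact mem_kstar_letters.2 <| (E.pstate_append_eq_iff φ (X := [])).1
    ((Realizes.pstate_eq hW).trans hp.symm)

lemma pathWords_succ {p : Fin (k + 2) → Fin f → ℕ} {τ : Fin (k + 1) → A}
    (hτ : ∀ X, E.pstate φ X = p (Fin.last k).castSucc →
      E.pstate φ (X ++ [τ (Fin.last k)]) = p (Fin.last (k + 1))) :
    E.pathWords φ p τ = E.pathWords φ (p ∘ Fin.castSucc) (τ ∘ Fin.castSucc) *
      ({[τ (Fin.last k)]} * (letters (E.stateLoopP φ (p (Fin.last (k + 1)))))∗) := by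
  refine Set.Subset.antisymm (fun W hW => ?_) ?_
  · obtain ⟨g, hg⟩ := realizes_iff.1 hW
    set m := g (Fin.last k)
    have hsplit : W.take (m + 1) ++ W.drop (m + 1) = W := List.take_append_drop _ _
    have htake : W.take (m + 1) = W.take m ++ [τ (Fin.last k)] := by
      rw [List.take_add_one, hg.getElem?_eq, Option.toList_some]
    have hafter : E.pstate φ (W.take (m + 1)) = p (Fin.last (k + 1)) := hg.pstate_after _
    have hloop : W.drop (m + 1) ∈ (letters (E.stateLoopP φ (p (Fin.last (k + 1)))))∗ := by
      rw [mem_kstar_letters, ← hafter, ← E.pstate_append_eq_iff φ, hsplit, hg.pstate_eq, hafter]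
    refine ⟨W.take m, realizes_iff.2 ⟨_, hg.take_last⟩, _, ⟨_, rfl, _, hloop, rfl⟩, ?_⟩
    simpa [htake] using hsplit
  · rintro _ ⟨X, hX, _, ⟨_, rfl, B, hB, rfl⟩, rfl⟩
    have := mem_pathWords_append_loop
      (mem_pathWords_append_transition hX (hτ X (Realizes.pstate_eq hX))) hB
    rwa [List.append_assoc] at this

lemma IsTransitionPath.dropLast {p : Fin (k + 2) → Fin f → ℕ} {τ : Fin (k + 1) → A}
    (h : E.IsTransitionPath φ p τ) :
    E.IsTransitionPath φ (p ∘ Fin.castSucc) (τ ∘ Fin.castSucc) :=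
  ⟨h.start, fun _ => h.valid _, fun j => h.lt j.castSucc, fun j => h.step j.castSucc⟩

lemma IsTransitionPath.snoc {p : Fin (k + 1) → Fin f → ℕ} {τ : Fin k → A}
    (h : E.IsTransitionPath φ p τ) {q : Fin f → ℕ} {a : A} (hq : ∀ i, q i < (φ i).length)
    (hlt : p (Fin.last k) < q)
    (hstep : ∀ X, E.pstate φ X = p (Fin.last k) → E.pstate φ (X ++ [a]) = q) :
    E.IsTransitionPath φ (Fin.snoc (α := fun _ => Fin f → ℕ) p q : Fin (k + 2) → Fin f → ℕ)
      (Fin.snoc (α := fun _ => A) τ a : Fin (k + 1) → A) := by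
  refine ⟨?_, Fin.forall_fin_succ'.2 ⟨fun j => ?_, ?_⟩, Fin.forall_fin_succ'.2 ⟨fun j => ?_, ?_⟩,
    Fin.forall_fin_succ'.2 ⟨fun j => ?_, ?_⟩⟩
  · rw [← Fin.castSucc_zero, Fin.snoc_castSucc]
    exact h.start
  · simpa using h.valid j
  · simpa using hq
  · simpa only [Fin.snoc_castSucc, Fin.succ_castSucc] using h.lt j
  · simpa only [Fin.snoc_castSucc, Fin.succ_last, Fin.snoc_last] using hlt
  · simpa only [Fin.snoc_castSucc, Fin.succ_castSucc] using h.step j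
  · simpa only [Fin.snoc_castSucc, Fin.succ_last, Fin.snoc_last] using hstep

-- The words of the first factor end in the state before the last transition, and reading the
-- transition symbol leaves that state for good.
lemma IsTransitionPath.unambiguous {p : Fin (k + 2) → Fin f → ℕ} {τ : Fin (k + 1) → A}
    (h : E.IsTransitionPath φ p τ) (S : Language A) :
    Unambiguous (E.pathWords φ (p ∘ Fin.castSucc) (τ ∘ Fin.castSucc))
      ({[τ (Fin.last k)]} * S) := by
  have eq_nil {U Z V B : List A} (hU : E.pstate φ U = p (Fin.last k).castSucc)
      (hUZ : E.pstate φ (U ++ Z) = p (Fin.last k).castSucc) (hZ : [τ (Fin.last k)] ++ B = Z ++ V) :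
      Z = [] := by
    obtain _ | ⟨t, Z⟩ := Z
    · rfl
    · obtain rfl : τ (Fin.last k) = t := (List.cons.inj hZ).1
      have hle := E.pstate_mono φ (E.le_append_right (U ++ [τ (Fin.last k)]) Z)
      rw [h.step _ U hU, List.append_assoc, List.singleton_append, hUZ] at hle
      exact absurd hle (h.lt (Fin.last k)).not_ge
  rintro U hU U' hU' _ ⟨_, rfl, B, -, rfl⟩ _ ⟨_, rfl, B', -, rfl⟩ heq
  replace hU := Realizes.pstate_eq hU
  replace hU' := Realizes.pstate_eq hU'
  obtain ⟨Z, rfl, hZ⟩ | ⟨Z, rfl, hZ⟩ := List.append_eq_append_iff.1 heq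
  · rw [eq_nil hU hU' hZ, List.append_nil]
  · rw [eq_nil hU' hU hZ, List.append_nil]

lemma IsTransitionPath.genFun_pathWords [Finite A] (hw : ∀ a, 0 < w a)
    {p : Fin (k + 1) → Fin f → ℕ} {τ : Fin k → A} (h : E.IsTransitionPath φ p τ) :
    genFun w (E.pathWords φ p τ) =
      (∏ j, genFun w (letters (E.stateLoopP φ (p j)))∗) * X ^ ∑ j, w (τ j) := by
  induction k with
  | zero => simp [pathWords_zero h.start]
  | succ k ih =>
    have hunamb : Unambiguous ({[τ (Fin.last k)]} : Language A)
        (letters (E.stateLoopP φ (p (Fin.last (k + 1)))))∗ := by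
      rintro _ rfl _ rfl _ - _ - -
      rfl
    rw [pathWords_succ (h.step _), genFun_mul hw (h.unambiguous _), genFun_mul hw hunamb,
      genFun_singleton, ih h.dropLast, Fin.prod_univ_castSucc (n := k + 1), Fin.sum_univ_castSucc,
      pow_add]
    simp only [Function.comp_apply, wt, List.map_singleton, List.sum_singleton]
    ring

lemma IsTransitionPath.pathWords_nonempty {p : Fin (k + 1) → Fin f → ℕ} {τ : Fin k → A}
    (h : E.IsTransitionPath φ p τ) : ∃ W, W ∈ E.pathWords φ p τ := by
  induction k with
  | zero => exact ⟨[], nil_mem_pathWords τ h.start⟩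
  | succ k ih =>
    obtain ⟨W, hW⟩ := ih h.dropLast
    exact ⟨_, mem_pathWords_append_transition hW (h.step _ W (Realizes.pstate_eq hW))⟩

lemma IsTransitionPath.pathWords_subset {p : Fin (k + 1) → Fin f → ℕ} {τ : Fin k → A}
    (h : E.IsTransitionPath φ p τ) : E.pathWords φ p τ ≤ E.Cset φ := fun _ hW =>
  (E.mem_Cset_iff φ).2 fun i => Realizes.pstate_eq hW ▸ h.valid _ i

variable (E φ) in
lemma exists_mem_pathWords {W : List A} (hW : W ∈ E.Cset φ) :
    ∃ (k : ℕ) (p : Fin (k + 1) → Fin f → ℕ) (τ : Fin k → A),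
      E.IsTransitionPath φ p τ ∧ W ∈ E.pathWords φ p τ := by
  induction W using List.reverseRecOn with
  | nil =>
    exact ⟨0, fun _ => E.pstate φ [], Fin.elim0, ⟨rfl, fun _ => (E.mem_Cset_iff φ).1 hW,
      fun j => j.elim0, fun j => j.elim0⟩, nil_mem_pathWords _ rfl⟩
  | append_singleton W a ih =>
    have hle := E.le_append_right W [a]
    obtain ⟨k, p, τ, hpath, hWp⟩ := ih fun i hi => hW i (E.le_trans hi hle)
    have hlast : E.pstate φ W = p (Fin.last k) := Realizes.pstate_eq hWp
    obtain heq | hne := eq_or_ne (E.pstate φ (W ++ [a])) (E.pstate φ W)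
    · refine ⟨k, p, τ, hpath, mem_pathWords_append_loop hWp (mem_kstar_letters.2 ?_)⟩
      rwa [← hlast, ← E.pstate_append_eq_iff φ]
    · have hlt := (E.pstate_mono φ hle).lt_of_ne hne.symm
      refine ⟨k + 1, _, _, hpath.snoc ((E.mem_Cset_iff φ).1 hW) (hlast ▸ hlt)
        fun X hX => E.pstate_append_congr φ (hX.trans hlast.symm) [a], ?_⟩
      have := mem_pathWords_append_transition (E := E) (φ := φ) (k := k)
        (p := Fin.snoc (α := fun _ => Fin f → ℕ) p (E.pstate φ (W ++ [a])))
        (τ := Fin.snoc (α := fun _ => A) τ a) (W := W)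
      simpa [Function.comp_def, hWp] using this

lemma IsTransitionPath.strictMono {p : Fin (k + 1) → Fin f → ℕ} {τ : Fin k → A}
    (h : E.IsTransitionPath φ p τ) : StrictMono p :=
  Fin.strictMono_iff_lt_succ.2 h.lt

end TransitionPaths

section PathAsymptotics

open PowerSeries Computability

variable {A : Type*} {w : A → ℕ} {E : EmbeddingOrder A w} {f : ℕ} {φ : Fin f → List A} {k : ℕ}

lemma isGreatest_gT (p : Fin (k + 1) → Fin f → ℕ) :
    IsGreatest {g | ∃ j, g = growthOf w (E.stateLoopP φ (p j))} (E.gT φ p) := by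
  have hfin : {g | ∃ j, g = growthOf w (E.stateLoopP φ (p j))}.Finite :=
    (Set.finite_range fun j => growthOf w (E.stateLoopP φ (p j))).subset
      fun _ ⟨j, hj⟩ => ⟨j, hj.symm⟩
  exact ⟨Set.Nonempty.csSup_mem ⟨_, 0, rfl⟩ hfin, fun _ hg => le_csSup hfin.bddAbove hg⟩

lemma growthOf_le_gT (p : Fin (k + 1) → Fin f → ℕ) (j : Fin (k + 1)) :
    growthOf w (E.stateLoopP φ (p j)) ≤ E.gT φ p :=
  (isGreatest_gT p).2 ⟨j, rfl⟩

lemma dT_eq_sum (p : Fin (k + 1) → Fin f → ℕ) :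
    E.dT φ p = ∑ j, if growthOf w (E.stateLoopP φ (p j)) = E.gT φ p then 1 else 0 := by
  rw [dT, Set.ncard_eq_toFinset_card', Set.toFinset_ofPred, Finset.card_filter]

lemma dT_pos (p : Fin (k + 1) → Fin f → ℕ) : 0 < E.dT φ p := by
  obtain ⟨j, hj⟩ := (isGreatest_gT (E := E) (φ := φ) p).1
  exact (Set.ncard_pos (Set.toFinite _)).2 ⟨j, hj.symm⟩

variable [Finite A] (hw : ∀ a, 0 < w a) {one : A} (hone : w one = 1)
  (hone_le : ∀ a : A, E.le [one] [a]) {p : Fin (k + 1) → Fin f → ℕ} {τ : Fin k → A}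

include hw hone hone_le

lemma hasGrowthOrder_loopBlock (hγ : 0 < E.gT φ p) (j : Fin (k + 1)) :
    HasGrowthOrder (if growthOf w (E.stateLoopP φ (p j)) = E.gT φ p then 1 else 0)
      (rescale (E.gT φ p)⁻¹ (genFun w (letters (E.stateLoopP φ (p j)))∗)) := by
  split_ifs with hj
  · have hne : (E.stateLoopP φ (p j)).Nonempty := by
      rw [Set.nonempty_iff_ne_empty, Ne, ← growthOf_eq_zero_iff hw, hj]
      exact hγ.ne'
    rw [← hj]
    exact hasGrowthOrder_one_kstar_letters hw hone (E.one_mem_stateLoopP φ hone_le hne)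
  · exact hasGrowthOrder_zero_kstar_letters hw ((growthOf_le_gT p j).lt_of_ne hj)

lemma IsTransitionPath.hasGrowthOrder (h : E.IsTransitionPath φ p τ) (hγ : 0 < E.gT φ p) :
    HasGrowthOrder (E.dT φ p) (rescale (E.gT φ p)⁻¹ (genFun w (E.pathWords φ p τ))) := by
  have hblocks := HasGrowthOrder.prod (s := Finset.univ) fun j _ =>
    hasGrowthOrder_loopBlock hw hone hone_le hγ j
  have hsymbols := hasGrowthOrder_C_mul_X_pow (pow_pos (inv_pos.2 hγ) (∑ j, w (τ j)))
    (∑ j, w (τ j))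
  rw [h.genFun_pathWords hw, map_mul, map_prod, map_pow, rescale_X, mul_pow, ← map_pow, dT_eq_sum]
  simpa only [add_zero] using hblocks.mul hsymbols

lemma IsTransitionPath.isTheta_coeff_genFun (h : E.IsTransitionPath φ p τ) :
    (fun n => coeff n (genFun w (E.pathWords φ p τ))) =Θ[atTop]
      fun n => (n : ℝ) ^ (E.dT φ p - 1) * E.gT φ p ^ n := by
  have hγ₀ : 0 ≤ E.gT φ p := growthOf_nonneg.trans (growthOf_le_gT p 0)
  obtain hγ | hγ := hγ₀.lt_or_eq
  · have hΘ := ((h.hasGrowthOrder hw hone hone_le hγ).isTheta (dT_pos p)).mul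
      (isTheta_refl (fun n : ℕ => E.gT φ p ^ n) atTop)
    refine IsTheta.trans (EventuallyEq.isTheta (Eventually.of_forall fun n => ?_)) hΘ
    rw [coeff_rescale, inv_pow, mul_comm, mul_inv_cancel_left₀ (pow_pos hγ n).ne']
  · have hempty (j) : E.stateLoopP φ (p j) = ∅ :=
      (growthOf_eq_zero_iff hw).1 (((growthOf_le_gT p j).trans_eq hγ.symm).antisymm growthOf_nonneg)
    have hmonomial : genFun w (E.pathWords φ p τ) = X ^ ∑ j, w (τ j) := by
      simp [h.genFun_pathWords hw, hempty, genFun_kstar_letters_empty hw]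
    refine EventuallyEq.isTheta ?_
    filter_upwards [eventually_gt_atTop (∑ j, w (τ j))] with n hn
    rw [hmonomial, coeff_X_pow, if_neg hn.ne', ← hγ, zero_pow (Nat.ne_zero_of_lt hn), mul_zero]

end PathAsymptotics

section ClassAsymptotics

open PowerSeries

variable {A : Type*} {w : A → ℕ} {E : EmbeddingOrder A w} {f : ℕ} {φ : Fin f → List A} {k : ℕ}

lemma finite_range_pstate : (Set.range (E.pstate φ)).Finite :=
  (Set.finite_Iic fun i => (φ i).length).subset (Set.range_subset_iff.2 (E.pstate_le_length φ))

lemma finite_setOf_dominant_pstate_take (W : List A) :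
    {q | (∃ i ≤ W.length, E.pstate φ (W.take i) = q) ∧
      growthOf w (E.stateLoopP φ q) = E.gammaC φ}.Finite :=
  finite_range_pstate.subset fun _ ⟨⟨i, _, hi⟩, _⟩ => ⟨W.take i, hi⟩

lemma isGreatest_gammaC (hC : (E.Cset φ).Nonempty) :
    IsGreatest {g | ∃ X ∈ E.Cset φ, g = growthOf w (E.stateLoopP φ (E.pstate φ X))}
      (E.gammaC φ) := by
  have hfin : {g | ∃ X ∈ E.Cset φ, g = growthOf w (E.stateLoopP φ (E.pstate φ X))}.Finite := by
    refine ((finite_range_pstate (E := E) (φ := φ)).image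
      fun q => growthOf w (E.stateLoopP φ q)).subset ?_
    rintro _ ⟨X, -, rfl⟩
    exact ⟨_, ⟨X, rfl⟩, rfl⟩
  obtain ⟨X, hX⟩ := hC
  exact ⟨Set.Nonempty.csSup_mem ⟨_, X, hX, rfl⟩ hfin, fun _ hg => le_csSup hfin.bddAbove hg⟩

lemma isGreatest_Dmax (hC : (E.Cset φ).Nonempty) :
    IsGreatest {d | ∃ W ∈ E.Cset φ, E.domCountP φ W = d} (E.Dmax φ) := by
  have hbdd : BddAbove {d | ∃ W ∈ E.Cset φ, E.domCountP φ W = d} := by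
    refine ⟨(Set.range (E.pstate φ)).ncard, ?_⟩
    rintro _ ⟨W, -, rfl⟩
    exact Set.ncard_le_ncard (fun _ ⟨⟨i, _, hi⟩, _⟩ => ⟨W.take i, hi⟩) finite_range_pstate
  obtain ⟨X, hX⟩ := hC
  exact ⟨Nat.sSup_mem ⟨_, X, hX, rfl⟩ hbdd, fun _ hd => le_csSup hbdd hd⟩

lemma Dmax_pos (hC : (E.Cset φ).Nonempty) : 0 < E.Dmax φ := by
  obtain ⟨X, hX, hγ⟩ := (isGreatest_gammaC hC).1
  have hpos : 0 < E.domCountP φ X :=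
    (Set.ncard_pos (finite_setOf_dominant_pstate_take X)).2
      ⟨E.pstate φ X, ⟨X.length, le_rfl, by rw [List.take_length]⟩, hγ.symm⟩
  exact hpos.trans_le ((isGreatest_Dmax hC).2 ⟨X, hX, rfl⟩)

lemma TransitionsAt.setOf_pstate_take_eq {p : Fin (k + 1) → Fin f → ℕ} {τ : Fin k → A}
    {W : List A} {g : Fin k → ℕ} (h : E.TransitionsAt φ p τ W g) (hp : E.pstate φ [] = p 0) :
    {q | ∃ i ≤ W.length, E.pstate φ (W.take i) = q} = Set.range p := by
  refine Set.Subset.antisymm ?_ (Set.range_subset_iff.2 (Fin.forall_fin_succ'.2 ⟨fun j => ?_, ?_⟩))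
  · rintro _ ⟨i, hi, rfl⟩
    induction i with
    | zero => exact ⟨0, hp.symm⟩
    | succ i ih =>
      by_cases hg : ∃ j, g j = i
      · obtain ⟨j, rfl⟩ := hg
        exact ⟨j.succ, (h.pstate_after j).symm⟩
      · rw [h.pstate_const i hi (not_exists.1 hg)]
        exact ih (Nat.le_of_succ_le hi)
  · exact ⟨g j, (h.lt_length j).le, h.pstate_before j⟩
  · exact ⟨W.length, le_rfl, by rw [List.take_length, h.pstate_eq]⟩

variable {p : Fin (k + 1) → Fin f → ℕ} {τ : Fin k → A}

lemma IsTransitionPath.setOf_pstate_take_eq (h : E.IsTransitionPath φ p τ) {W : List A}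
    (hW : W ∈ E.pathWords φ p τ) :
    {q | ∃ i ≤ W.length, E.pstate φ (W.take i) = q} = Set.range p :=
  (realizes_iff.1 hW).elim fun _ hg => hg.setOf_pstate_take_eq h.start

lemma IsTransitionPath.Cset_nonempty (h : E.IsTransitionPath φ p τ) : (E.Cset φ).Nonempty :=
  ⟨[], (E.mem_Cset_iff φ).2 (h.start ▸ h.valid 0)⟩

lemma IsTransitionPath.growthOf_le_gammaC (h : E.IsTransitionPath φ p τ) (j : Fin (k + 1)) :
    growthOf w (E.stateLoopP φ (p j)) ≤ E.gammaC φ := by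
  obtain ⟨W, hW⟩ := h.pathWords_nonempty
  obtain ⟨i, -, hi⟩ := (h.setOf_pstate_take_eq hW).ge ⟨j, rfl⟩
  exact (isGreatest_gammaC h.Cset_nonempty).2
    ⟨W.take i, (E.mem_Cset_iff φ).2 (hi ▸ h.valid j), by rw [hi]⟩

lemma IsTransitionPath.gT_le_gammaC (h : E.IsTransitionPath φ p τ) :
    E.gT φ p ≤ E.gammaC φ := by
  obtain ⟨j, hj⟩ := (isGreatest_gT (E := E) (φ := φ) p).1
  exact hj.trans_le (h.growthOf_le_gammaC j)

lemma IsTransitionPath.domCountP_eq (h : E.IsTransitionPath φ p τ) {W : List A}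
    (hW : W ∈ E.pathWords φ p τ) :
    E.domCountP φ W = {j | growthOf w (E.stateLoopP φ (p j)) = E.gammaC φ}.ncard := by
  have hvisited (q) : (∃ i ≤ W.length, E.pstate φ (W.take i) = q) ↔ ∃ j, p j = q :=
    Set.ext_iff.1 (h.setOf_pstate_take_eq hW) q
  rw [domCountP, ← Set.ncard_image_of_injective _ h.strictMono.injective]
  congr 1
  ext q
  simp only [hvisited, Set.mem_ofPred_eq, Set.mem_image]
  constructor
  · rintro ⟨⟨j, rfl⟩, hj⟩
    exact ⟨j, hj, rfl⟩
  · rintro ⟨j, hj, rfl⟩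
    exact ⟨⟨j, rfl⟩, hj⟩

lemma IsTransitionPath.dT_le_Dmax (h : E.IsTransitionPath φ p τ) (hγ : E.gT φ p = E.gammaC φ) :
    E.dT φ p ≤ E.Dmax φ := by
  obtain ⟨W, hW⟩ := h.pathWords_nonempty
  rw [dT, hγ, ← h.domCountP_eq hW]
  exact (isGreatest_Dmax h.Cset_nonempty).2 ⟨W, h.pathWords_subset hW, rfl⟩

lemma exists_isTransitionPath_gT_eq_dT_eq (hC : (E.Cset φ).Nonempty) :
    ∃ (k : ℕ) (p : Fin (k + 1) → Fin f → ℕ) (τ : Fin k → A),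
      E.IsTransitionPath φ p τ ∧ E.gT φ p = E.gammaC φ ∧ E.dT φ p = E.Dmax φ := by
  obtain ⟨W, hW, hD⟩ := (isGreatest_Dmax hC).1
  obtain ⟨k, p, τ, h, hWp⟩ := exists_mem_pathWords E φ hW
  rw [h.domCountP_eq hWp] at hD
  obtain ⟨j, hj⟩ : {j | growthOf w (E.stateLoopP φ (p j)) = E.gammaC φ}.Nonempty :=
    Set.nonempty_of_ncard_ne_zero (hD.trans_ne (Dmax_pos hC).ne')
  have hγ : E.gT φ p = E.gammaC φ := h.gT_le_gammaC.antisymm (hj.ge.trans (growthOf_le_gT p j))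
  exact ⟨k, p, τ, h, hγ, by rw [dT, hγ, hD]⟩

lemma finite_setOf_pathWords [Finite A] :
    {S | ∃ (k : ℕ) (p : Fin (k + 1) → Fin f → ℕ) (τ : Fin k → A),
      E.IsTransitionPath φ p τ ∧ E.pathWords φ p τ = S}.Finite := by
  have : Finite (Set.Iic fun i => (φ i).length) := Set.finite_Iic _
  refine (Set.finite_range fun x : Σ k : Fin (Nat.card (Set.Iic fun i => (φ i).length)),
    (Fin (k + 1) → Set.Iic fun i => (φ i).length) × (Fin k → A) =>
      E.pathWords φ (fun j => (x.2.1 j : Fin f → ℕ)) x.2.2).subset ?_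
  rintro _ ⟨k, p, τ, h, rfl⟩
  let states (j : Fin (k + 1)) : Set.Iic fun i => (φ i).length := ⟨p j, fun i => (h.valid j i).le⟩
  have hinj : Function.Injective states :=
    fun i j hij => h.strictMono.injective (congrArg Subtype.val hij)
  have hk : k < Nat.card (Set.Iic fun i => (φ i).length) := by
    simpa using Nat.card_le_card_of_injective states hinj
  exact ⟨⟨⟨k, hk⟩, states, τ⟩, rfl⟩

lemma isBigO_coeff_genFun_of_finite_cover [Finite A] (hw : ∀ a, 0 < w a) {S : Language A}
    {𝓕 : Set (Language A)} (h𝓕 : 𝓕.Finite) (hcover : ∀ W ∈ S, ∃ T ∈ 𝓕, W ∈ T) {g : ℕ → ℝ}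
    (hg : ∀ T ∈ 𝓕, (fun n => coeff n (genFun w T)) =O[atTop] g) :
    (fun n => coeff n (genFun w S)) =O[atTop] g := by
  have hsum (n : ℕ) : coeff n (genFun w S) ≤ ∑ T ∈ h𝓕.toFinset, coeff n (genFun w T) := by
    have hsubset : {W | W ∈ S ∧ wt w W = n} ⊆ ⋃ T ∈ h𝓕.toFinset, {W | W ∈ T ∧ wt w W = n} := by
      rintro W ⟨hW, hn⟩
      obtain ⟨T, hT, hWT⟩ := hcover W hW
      exact Set.mem_biUnion (h𝓕.mem_toFinset.2 hT) ⟨hWT, hn⟩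
    simp only [coeff_genFun]
    exact_mod_cast (Set.ncard_le_ncard hsubset (h𝓕.toFinset.finite_toSet.biUnion fun T _ =>
      finite_setOf_mem_and_wt_eq hw T n)).trans (Finset.set_ncard_biUnion_le _ _)
  refine IsBigO.trans (IsBigO.of_norm_le fun n => ?_)
    (IsBigO.sum fun T hT => hg T (h𝓕.mem_toFinset.1 hT))
  rw [Real.norm_of_nonneg (by simpa using coeffLE_zero_genFun S n)]
  simpa only [Finset.sum_apply] using hsum n

lemma isBigO_pow_mul_pow {d D : ℕ} {x y : ℝ} (hx : 0 ≤ x) (hxy : x ≤ y) (hd : x = y → d ≤ D) :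
    (fun n : ℕ => (n : ℝ) ^ d * x ^ n) =O[atTop] fun n => (n : ℝ) ^ D * y ^ n := by
  have hpow {d D : ℕ} (h : d ≤ D) : (fun n : ℕ => (n : ℝ) ^ d) =O[atTop] fun n => (n : ℝ) ^ D := by
    refine IsBigO.of_norm_eventuallyLE ?_
    filter_upwards [eventually_ge_atTop 1] with n hn
    rw [Real.norm_of_nonneg (by positivity)]
    exact pow_le_pow_right₀ (mod_cast hn) h
  obtain rfl | hlt := hxy.eq_or_lt
  · exact (hpow (hd rfl)).mul (isBigO_refl _ _)
  · refine (isLittleO_pow_const_mul_const_pow_const_pow_of_norm_lt d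
      (by rwa [Real.norm_of_nonneg hx])).isBigO.trans ?_
    simpa using (hpow (Nat.zero_le D)).mul (isBigO_refl (fun n : ℕ => y ^ n) atTop)

variable [Finite A] (hw : ∀ a, 0 < w a) {one : A} (hone : w one = 1)
  (hone_le : ∀ a : A, E.le [one] [a])

include hw hone hone_le

lemma IsTransitionPath.isBigO_coeff_genFun (h : E.IsTransitionPath φ p τ) :
    (fun n => coeff n (genFun w (E.pathWords φ p τ))) =O[atTop]
      fun n => (n : ℝ) ^ (E.Dmax φ - 1) * E.gammaC φ ^ n :=
  (h.isTheta_coeff_genFun hw hone hone_le).1.trans <|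
    isBigO_pow_mul_pow (growthOf_nonneg.trans (growthOf_le_gT p 0)) h.gT_le_gammaC
      fun hγ => Nat.sub_le_sub_right (h.dT_le_Dmax hγ) 1

lemma isTheta_coeff_genFun_Cset (hC : (E.Cset φ).Nonempty) :
    (fun n => coeff n (genFun w (E.Cset φ))) =Θ[atTop]
      fun n => (n : ℝ) ^ (E.Dmax φ - 1) * E.gammaC φ ^ n := by
  constructor
  · refine isBigO_coeff_genFun_of_finite_cover hw (finite_setOf_pathWords (E := E) (φ := φ))
      (fun W hW => ?_) ?_
    · obtain ⟨k, p, τ, h, hWp⟩ := exists_mem_pathWords E φ hW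
      exact ⟨_, ⟨k, p, τ, h, rfl⟩, hWp⟩
    · rintro _ ⟨k, p, τ, h, rfl⟩
      exact h.isBigO_coeff_genFun hw hone hone_le
  · obtain ⟨k, p, τ, h, hγ, hD⟩ := exists_isTransitionPath_gT_eq_dT_eq hC
    rw [← hγ, ← hD]
    refine (h.isTheta_coeff_genFun hw hone hone_le).2.trans (IsBigO.of_norm_le fun n => ?_)
    rw [Real.norm_of_nonneg (by simpa using coeffLE_zero_genFun _ n)]
    exact coeff_genFun_mono hw h.pathWords_subset n

end ClassAsymptotics

end EmbeddingOrder

theorem transition_path_asymptotics_general {A : Type*} [Finite A] {w : A → ℕ}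
    (E : EmbeddingOrder A w) {f : ℕ} (φ : Fin f → List A) (hw : ∀ a, 0 < w a)
    (one : A) (hone : w one = 1) (hone_le : ∀ a : A, E.le [one] [a])
    (k : ℕ) (p : Fin (k + 1) → Fin f → ℕ) (τ : Fin k → A) (hT : E.IsTransitionPath φ p τ) :
    ((fun n => (Set.ncard {W : List A | W ∈ E.Cset φ ∧ wt w W = n ∧
          E.Realizes φ p τ W} : ℝ))
        =Θ[atTop] fun n => (n : ℝ) ^ (E.dT φ p - 1) * E.gT φ p ^ n) ∧
      ((fun n => (Set.ncard {W : List A | W ∈ E.Cset φ ∧ wt w W = n} : ℝ))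
        =Θ[atTop] fun n => (n : ℝ) ^ (E.Dmax φ - 1) * E.gammaC φ ^ n) := by
  have hset (n : ℕ) : {W | W ∈ E.Cset φ ∧ wt w W = n ∧ E.Realizes φ p τ W} =
      {W | W ∈ E.pathWords φ p τ ∧ wt w W = n} :=
    Set.ext fun W => ⟨fun h => ⟨h.2.2, h.2.1⟩, fun h => ⟨hT.pathWords_subset h.1, h.2, h.1⟩⟩
  have hclass (n : ℕ) : ({W | W ∈ E.Cset φ ∧ wt w W = n}.ncard : ℝ) =
      PowerSeries.coeff n (genFun w (E.Cset φ)) := (coeff_genFun _ n).symm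
  simp only [hset, ← coeff_genFun, hclass]
  exact ⟨hT.isTheta_coeff_genFun hw hone hone_le,
    isTheta_coeff_genFun_Cset hw hone hone_le hT.Cset_nonempty⟩

/-- **Proposition `pro-growth`.**  Let `T = (p 0 < p 1 < ⋯ < p k)` be a prefix
transition path (valid states, starting at the initial state) and `τ j` a transition
symbol from `p j` to `p (j+1)`.  Let `C_n(T,τ)` be the set of weight-`n` words of `C`
with prefix transition path `T`, the `j`-th transition on symbol `τ j`.  Then
`|C_n(T,τ)| = Θ(n^{d_T−1}·γ_Tⁿ)`; consequently `|C_n| = Θ(n^{D−1}·γⁿ)`. -/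
theorem transition_path_asymptotics {A : Type*} [Fintype A] {w : A → ℕ}
    (E : EmbeddingOrder A w) {f : ℕ} (φ : Fin f → List A)
    (hw : ∀ a, 0 < w a)
    (one : A) (hone : w one = 1) (hone_le : ∀ a : A, E.le [one] [a])
    (hf : 0 < f) (hφne : ∀ i, φ i ≠ [])
    (hφmin : ∀ i ψ, E.le ψ (φ i) → ψ ≠ φ i → ψ ∈ E.Cset φ)
    (hunb : ¬ ∃ M : ℕ, ∀ n : ℕ,
      Set.ncard {W : List A | W ∈ E.Cset φ ∧ EmbeddingOrder.wt w W = n} ≤ M)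
    (k : ℕ) (p : Fin (k + 1) → Fin f → ℕ) (τ : Fin k → A)
    (hp0 : E.pstate φ [] = p 0)
    (hvalid : ∀ j i, p j i < (φ i).length)
    (hmono : ∀ j : Fin k, p j.castSucc ≤ p j.succ ∧ p j.castSucc ≠ p j.succ)
    (hτ : ∀ j : Fin k, ∀ X : List A, E.pstate φ X = p j.castSucc →
      E.pstate φ (X ++ [τ j]) = p j.succ) :
    ((fun n => (Set.ncard {W : List A | W ∈ E.Cset φ ∧ wt w W = n ∧
          E.Realizes φ p τ W} : ℝ))
        =Θ[atTop] fun n => (n : ℝ) ^ (E.dT φ p - 1) * E.gT φ p ^ n) ∧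
      ((fun n => (Set.ncard {W : List A | W ∈ E.Cset φ ∧ wt w W = n} : ℝ))
        =Θ[atTop] fun n => (n : ℝ) ^ (E.Dmax φ - 1) * E.gammaC φ ^ n) := by
  exact transition_path_asymptotics_general E φ hw one hone hone_le k p τ
    ⟨hp0, hvalid, fun j => (hmono j).1.lt_of_ne (hmono j).2, hτ⟩
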